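/- Let n ≥ 1, let the control set be the unit sphere 𝔸 = S^{n−1} = {A ∈ ℝ^n : |A| = 1}, let f(q,A) = A, and let K(t,q,A) = g'(t), where g : [0,∞) → [0,∞) is continuously differentiable, nondecreasing (g' ≥ 0), and g(0) = 0. Then for all x, y ∈ ℝ^n, the transport cost satisfies c(x,y) = g(|y − x|). -/

import Mathlib

/-!
A trajectory driven by unit vectors has speed at most one, so reaching `y` from `x` takes time
`τ ≥ ‖y - x‖`, while the cost of any control with terminal time `τ` is `∫ t in 0..τ, g' t = g τ`
by the fundamental theorem of calculus. As `g` is nondecreasing on `[0, ∞)`, every admissible cost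
is at least `g ‖y - x‖`. The constant control pointing from `x` to `y` takes time exactly
`‖y - x‖`, so this lower bound is attained and is the least element of `costSet`.
-/

open MeasureTheory Set

noncomputable section

abbrev Euc (n : ℕ) := EuclideanSpace ℝ (Fin n)

def IsTraj {n : ℕ} {𝔸 : Type*} (f : Euc n → 𝔸 → Euc n) (A : ℝ → 𝔸) (t₀ : ℝ)
    (q : Euc n) (γ : ℝ → Euc n) : Prop :=
  ∀ s : ℝ, t₀ ≤ s → γ s = q + ∫ r in t₀..s, f (γ r) (A r)

def costSet {n : ℕ} {𝔸 : Type*} [MeasurableSpace 𝔸] (f : Euc n → 𝔸 → Euc n)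
    (K : ℝ → Euc n → 𝔸 → ℝ) (x y : Euc n) : Set ℝ :=
  {r | ∃ (τ : ℝ) (A : ℝ → 𝔸) (γ : ℝ → Euc n), 0 ≤ τ ∧ Measurable A ∧
    IsTraj f A 0 x γ ∧ γ τ = y ∧ r = ∫ t in (0:ℝ)..τ, K t (γ t) (A t)}

def cost {n : ℕ} {𝔸 : Type*} [MeasurableSpace 𝔸] (f : Euc n → 𝔸 → Euc n)
    (K : ℝ → Euc n → 𝔸 → ℝ) (x y : Euc n) : ℝ :=
  sInf (costSet f K x y)

/-- A trajectory of unit speed covers a distance of at most the elapsed time. -/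
theorem norm_sub_le_of_isTraj_sphere {n : ℕ} {A : ℝ → Metric.sphere (0 : Euc n) 1}
    {γ : ℝ → Euc n} {x : Euc n} {τ : ℝ} (hτ : 0 ≤ τ)
    (h : IsTraj (𝔸 := Metric.sphere (0 : Euc n) 1) (fun _ A => (A : Euc n)) A 0 x γ) : ‖γ τ - x‖ ≤ τ := by
  rw [h τ hτ, add_sub_cancel_left]
  have hb := intervalIntegral.norm_integral_le_of_norm_le_const (a := 0) (b := τ) (C := 1)
    (f := fun r => (A r : Euc n)) (fun r _ => (norm_eq_of_mem_sphere (A r)).le)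
  simpa [abs_of_nonneg hτ] using hb

/-- For `n ≥ 1` every vector is its norm times a unit vector; for the zero vector this uses that
the unit sphere is nonempty. -/
theorem exists_sphere_norm_smul_eq {n : ℕ} (hn : 1 ≤ n) (v : Euc n) :
    ∃ u : Metric.sphere (0 : Euc n) 1, ‖v‖ • (u : Euc n) = v := by
  by_cases hv : v = 0
  · refine ⟨⟨EuclideanSpace.single ⟨0, hn⟩ 1, by simp⟩, by simp [hv]⟩
  · refine ⟨⟨‖v‖⁻¹ • v, by simp [norm_smul, hv]⟩, ?_⟩
    simp [smul_smul, hv]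

theorem cost_of_time_penalty_eq_g_of_dist
    {n : ℕ} (hn : 1 ≤ n) (g : ℝ → ℝ)
    (hg : ContDiff ℝ 1 g) (hg0 : g 0 = 0)
    (hg' : ∀ t : ℝ, 0 ≤ t → 0 ≤ deriv g t)
    (hgnn : ∀ t : ℝ, 0 ≤ t → 0 ≤ g t) :
    ∀ x y : Euc n,
      cost (𝔸 := Metric.sphere (0 : Euc n) 1)
        (fun _ A => (A : Euc n)) (fun t _ _ => deriv g t) x y = g ‖y - x‖ := by
  intro x y
  have hcost : ∀ τ : ℝ, ∫ t in (0 : ℝ)..τ, deriv g t = g τ := fun τ => by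
    rw [intervalIntegral.integral_deriv_eq_sub
      (fun t _ => (hg.differentiable one_ne_zero).differentiableAt)
      ((hg.continuous_deriv le_rfl).intervalIntegrable _ _), hg0, sub_zero]
  have hmono : MonotoneOn g (Ici 0) :=
    monotoneOn_of_deriv_nonneg (convex_Ici 0) hg.continuous.continuousOn
      (hg.differentiable one_ne_zero).differentiableOn
      fun t ht => hg' t (interior_subset ht)
  refine IsLeast.csInf_eq (a := g ‖y - x‖) ⟨?_, ?_⟩
  · obtain ⟨u, hu⟩ := exists_sphere_norm_smul_eq hn (y - x)
    refine ⟨‖y - x‖, fun _ => u, fun s => x + s • (u : Euc n), norm_nonneg _,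
      measurable_const, fun s _ => by simp, by simp [hu], (hcost _).symm⟩
  · rintro r ⟨τ, A, γ, hτ, -, hγ, rfl, rfl⟩
    rw [hcost τ]
    exact hmono (norm_nonneg _) hτ (norm_sub_le_of_isTraj_sphere hτ hγ)
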